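/- Suppose k_i = k for all i ∈ [n] and let C ⊆ 𝔽_q^N be a (P,w,π)-code with at least two codewords and minimum distance d_{(P,w,π)}(C). If C is MDS (i.e., max_{J ∈ 𝓘^r} Σ_{i∈J} k_i = N − ⌈log_q |C|⌉ where r = ⌊(d_{(P,w,π)}(C)−1)/M_w⌋), then M_w·(n − ⌈log_q |C|⌉/k) + 1 ≤ d_{(P,w,π)}(C) ≤ M_w·(n − ⌈log_q |C|⌉/k + 1). -/

import Mathlib

open scoped Classical

noncomputable section

variable {F : Type*} [Field F] [Fintype F]
variable {ι : Type*} [Fintype ι] [PartialOrder ι]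

/-- The block weight induced by `w`: the maximum of the weights of the coordinates. -/
def blockWt (w : F → ℕ) {m : ℕ} (v : Fin m → F) : ℕ :=
  Finset.univ.sup fun t => w (v t)

/-- `M_w`, the maximum weight of an element of `F`. -/
def maxWt (w : F → ℕ) : ℕ := Finset.univ.sup w

/-- `D_r = {α ∈ F : w(α) = r}`. -/
def Dset (w : F → ℕ) (r : ℕ) : Finset F := Finset.univ.filter fun a => w a = r

/-- `D_r^k = {v ∈ F^k : w̃^k(v) = r}`. -/
def Dk (w : F → ℕ) (m r : ℕ) : Finset (Fin m → F) :=
  Finset.univ.filter fun v => blockWt w v = r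

/-- The order ideal (down-set) of the poset generated by a finite set `A`. -/
def genIdeal (A : Finset ι) : Finset ι := Finset.univ.filter fun i => ∃ j ∈ A, i ≤ j

/-- The set of maximal elements of a finite set `I`. -/
def maxElems (I : Finset ι) : Finset ι := I.filter fun i => ∀ j ∈ I, i ≤ j → j = i

/-- `I` is an order ideal (down-set) of the poset. -/
def IsIdeal (I : Finset ι) : Prop := ∀ a b : ι, a ≤ b → b ∈ I → a ∈ I

/-- The collection `𝓘_j^i` of ideals of cardinality `i` with exactly `j` maximal elements. -/
def idealsWithMax (ι : Type*) [Fintype ι] [PartialOrder ι] (j i : ℕ) : Finset (Finset ι) :=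
  Finset.univ.filter fun I => IsIdeal I ∧ I.card = i ∧ (maxElems I).card = j

/-- The π-support of a block vector. -/
def suppPi (k : ι → ℕ) (x : ∀ i, Fin (k i) → F) : Finset ι :=
  Finset.univ.filter fun i => x i ≠ 0

/-- The `(P,w,π)`-weight. -/
def wtP (w : F → ℕ) (k : ι → ℕ) (x : ∀ i, Fin (k i) → F) : ℕ :=
  ∑ i ∈ maxElems (genIdeal (suppPi k x)), blockWt w (x i)
    + maxWt w * ((genIdeal (suppPi k x)) \ maxElems (genIdeal (suppPi k x))).card

/-- The `(P,w,π)`-distance. -/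
def dP (w : F → ℕ) (k : ι → ℕ) (x y : ∀ i, Fin (k i) → F) : ℕ := wtP w k (x - y)

/-- The collection `𝓘^r` of ideals of cardinality `r`. -/
def idealsCard (ι : Type*) [Fintype ι] [PartialOrder ι] (r : ℕ) : Finset (Finset ι) :=
  Finset.univ.filter fun I => IsIdeal I ∧ I.card = r

/-!
Let `n` be the number of blocks, `M = maxWt w`, `L = ⌈log_q |C|⌉`, and let `d` be the minimum
distance. Since `1 ≤ d ≤ M * n`, the number `r = ⌊(d - 1) / M⌋` is less than `n`, and a finite poset
has an ideal of every cardinality up to `n`. With blocks of constant length `k` the maximum in the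
Singleton bound is therefore `r * k`, so that equality in the bound reads `L = (n - r) * k`, that is
`r = n - L / k`. The two estimates are the inequalities `M * r < d ≤ M * (r + 1)` defining `r`.
-/

section Ideals

theorem IsIdeal.insert_of_forall_lt_mem {α : Type*} [PartialOrder α] {I : Finset α} {m : α}
    (hI : IsIdeal I) (hm : ∀ a < m, a ∈ I) : IsIdeal (insert m I) := by
  intro a b hab hb
  rw [Finset.mem_insert] at hb ⊢
  rcases hb with rfl | hb
  · exact hab.eq_or_lt.imp_right (hm a)
  · exact Or.inr (hI a b hab hb)

theorem exists_isIdeal_card_eq {r : ℕ} (hr : r ≤ Fintype.card ι) :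
    ∃ I : Finset ι, IsIdeal I ∧ I.card = r := by
  induction r with
  | zero => exact ⟨∅, fun _ _ _ hb => absurd hb (Finset.notMem_empty _), Finset.card_empty⟩
  | succ r ih =>
    obtain ⟨I, hI, hcard⟩ := ih (by omega)
    have hcompl : Iᶜ.Nonempty := by
      rw [← Finset.card_pos, Finset.card_compl]
      omega
    obtain ⟨m, hm⟩ := Finset.exists_minimal hcompl
    have hbelow : ∀ a < m, a ∈ I := fun a ha => by
      simpa only [Finset.mem_compl, not_not] using hm.not_prop_of_lt ha
    refine ⟨insert m I, hI.insert_of_forall_lt_mem hbelow, ?_⟩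
    rw [Finset.card_insert_of_notMem (Finset.mem_compl.1 hm.prop), hcard]

theorem sup_idealsCard_sum_const {r : ℕ} (hr : r ≤ Fintype.card ι) (k : ℕ) :
    (idealsCard ι r).sup (fun J => ∑ _i ∈ J, k) = r * k := by
  have hcard : ∀ J ∈ idealsCard ι r, ∑ _i ∈ J, k = r * k := fun J hJ => by
    rw [Finset.sum_const, smul_eq_mul, (Finset.mem_filter.1 hJ).2.2]
  obtain ⟨I, hI⟩ := exists_isIdeal_card_eq hr
  have hne : (idealsCard ι r).Nonempty := ⟨I, Finset.mem_filter.2 ⟨Finset.mem_univ I, hI⟩⟩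
  rw [Finset.sup_congr rfl hcard, Finset.sup_const hne]

theorem mem_genIdeal {A : Finset ι} {i : ι} : i ∈ genIdeal A ↔ ∃ j ∈ A, i ≤ j := by
  simp only [genIdeal, Finset.mem_filter, Finset.mem_univ, true_and]

theorem subset_genIdeal (A : Finset ι) : A ⊆ genIdeal A :=
  fun i hi => mem_genIdeal.2 ⟨i, hi, le_rfl⟩

theorem mem_maxElems {I : Finset ι} {i : ι} : i ∈ maxElems I ↔ Maximal (· ∈ I) i := by
  rw [maxElems, Finset.mem_filter, maximal_iff]
  simp only [eq_comm]

theorem maxElems_subset (I : Finset ι) : maxElems I ⊆ I :=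
  Finset.filter_subset _ _

theorem maxElems_genIdeal_subset (A : Finset ι) : maxElems (genIdeal A) ⊆ A := by
  intro i hi
  have hmax := mem_maxElems.1 hi
  obtain ⟨j, hj, hij⟩ := mem_genIdeal.1 hmax.prop
  rwa [hmax.eq_of_le (subset_genIdeal A hj) hij]

end Ideals

section Weights

theorem le_maxWt {α : Type*} [Fintype α] (w : α → ℕ) (a : α) : w a ≤ maxWt w :=
  Finset.le_sup (Finset.mem_univ a)

theorem blockWt_le_maxWt {α : Type*} [Fintype α] (w : α → ℕ) {m : ℕ} (v : Fin m → α) :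
    blockWt w v ≤ maxWt w :=
  Finset.sup_le fun t _ => le_maxWt w (v t)

theorem maxWt_pos {α : Type*} [Zero α] [Nontrivial α] [Fintype α] {w : α → ℕ}
    (hw : ∀ a, w a = 0 → a = 0) : 0 < maxWt w := by
  obtain ⟨a, ha⟩ := exists_ne (0 : α)
  exact (Nat.pos_of_ne_zero (mt (hw a) ha)).trans_le (le_maxWt w a)

theorem blockWt_pos {α : Type*} [Zero α] {w : α → ℕ} (hw : ∀ a, w a = 0 → a = 0) {m : ℕ}
    {v : Fin m → α} (hv : v ≠ 0) : 0 < blockWt w v := by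
  obtain ⟨t, ht⟩ := Function.ne_iff.1 hv
  exact (Nat.pos_of_ne_zero (mt (hw _) ht)).trans_le
    (Finset.le_sup (f := fun t => w (v t)) (Finset.mem_univ t))

theorem wtP_pos {w : F → ℕ} (hw : ∀ a, w a = 0 → a = 0) {k : ι → ℕ} {x : ∀ i, Fin (k i) → F}
    (hx : x ≠ 0) : 0 < wtP w k x := by
  obtain ⟨i, hi⟩ := Function.ne_iff.1 hx
  have hsupp : i ∈ suppPi k x := Finset.mem_filter.2 ⟨Finset.mem_univ i, hi⟩
  obtain ⟨m, hm⟩ := Finset.exists_maximal ⟨i, subset_genIdeal _ hsupp⟩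
  have hmem : m ∈ maxElems (genIdeal (suppPi k x)) := mem_maxElems.2 hm
  have hxm : x m ≠ 0 := (Finset.mem_filter.1 (maxElems_genIdeal_subset _ hmem)).2
  have hsum : 0 < ∑ i ∈ maxElems (genIdeal (suppPi k x)), blockWt w (x i) :=
    Finset.sum_pos' (fun _ _ => Nat.zero_le _) ⟨m, hmem, blockWt_pos hw hxm⟩
  exact Nat.add_pos_left hsum _

theorem wtP_le_maxWt_mul_card_genIdeal (w : F → ℕ) (k : ι → ℕ) (x : ∀ i, Fin (k i) → F) :
    wtP w k x ≤ maxWt w * (genIdeal (suppPi k x)).card := by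
  set I := genIdeal (suppPi k x)
  have hmax : ∑ i ∈ maxElems I, blockWt w (x i) ≤ (maxElems I).card * maxWt w :=
    Finset.sum_le_card_nsmul _ _ _ fun i _ => blockWt_le_maxWt w (x i)
  calc wtP w k x
      ≤ (maxElems I).card * maxWt w + maxWt w * (I \ maxElems I).card := Nat.add_le_add_right hmax _
    _ = maxWt w * ((I \ maxElems I).card + (maxElems I).card) := by ring
    _ = maxWt w * I.card := by rw [Finset.card_sdiff_add_card_eq_card (maxElems_subset I)]

end Weights

section Codes

/-- The minimum distance `d_{(P,w,π)}(C)` of a code; it is `0` if `C` has fewer than two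
codewords. -/
def minDist (w : F → ℕ) (k : ι → ℕ) (C : Finset (∀ i, Fin (k i) → F)) : ℕ :=
  sInf {s : ℕ | ∃ c₁ ∈ C, ∃ c₂ ∈ C, c₁ ≠ c₂ ∧ dP w k c₁ c₂ = s}

/-- A maximum distance separable code, i.e. one attaining the Singleton bound for the
`(P,w,π)`-distance. The subtraction is not truncated, by `clog_card_le_sum`. -/
def IsMDS (w : F → ℕ) (k : ι → ℕ) (C : Finset (∀ i, Fin (k i) → F)) : Prop :=
  (idealsCard ι ((minDist w k C - 1) / maxWt w)).sup (fun J => ∑ i ∈ J, k i) =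
    ∑ i, k i - Nat.clog (Fintype.card F) C.card

theorem clog_card_le_sum {α β : Type*} [Fintype α] [Fintype β] {k : β → ℕ}
    (C : Finset (∀ i, Fin (k i) → α)) : Nat.clog (Fintype.card α) C.card ≤ ∑ i, k i := by
  refine Nat.clog_le_of_le_pow ((Finset.card_le_univ C).trans_eq ?_)
  simp only [Fintype.card_pi, Finset.prod_const, Finset.card_univ, Fintype.card_fin,
    Finset.prod_pow_eq_pow_sum]

variable {w : F → ℕ} {k : ι → ℕ} {C : Finset (∀ i, Fin (k i) → F)}

theorem exists_dP_eq_minDist (w : F → ℕ) (hC : C.Nontrivial) :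
    ∃ c₁ ∈ C, ∃ c₂ ∈ C, c₁ ≠ c₂ ∧ dP w k c₁ c₂ = minDist w k C :=
  have ⟨c₁, h₁, c₂, h₂, hne⟩ := hC
  Nat.sInf_mem (s := {s | ∃ c₁ ∈ C, ∃ c₂ ∈ C, c₁ ≠ c₂ ∧ dP w k c₁ c₂ = s})
    ⟨_, c₁, h₁, c₂, h₂, hne, rfl⟩

theorem minDist_pos (hw : ∀ a, w a = 0 → a = 0) (hC : C.Nontrivial) : 0 < minDist w k C := by
  obtain ⟨c₁, -, c₂, -, hne, hdist⟩ := exists_dP_eq_minDist w hC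
  exact hdist ▸ wtP_pos hw (sub_ne_zero.2 hne)

theorem minDist_le_maxWt_mul_card (w : F → ℕ) (hC : C.Nontrivial) :
    minDist w k C ≤ maxWt w * Fintype.card ι := by
  obtain ⟨c₁, -, c₂, -, -, hdist⟩ := exists_dP_eq_minDist w hC
  calc minDist w k C = wtP w k (c₁ - c₂) := hdist.symm
    _ ≤ maxWt w * (genIdeal (suppPi k (c₁ - c₂))).card := wtP_le_maxWt_mul_card_genIdeal w k _
    _ ≤ maxWt w * Fintype.card ι := Nat.mul_le_mul_left _ (Finset.card_le_univ _)

theorem minDist_sub_one_div_maxWt_lt_card (hw : ∀ a, w a = 0 → a = 0) (hC : C.Nontrivial) :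
    (minDist w k C - 1) / maxWt w < Fintype.card ι :=
  Nat.div_lt_of_lt_mul <|
    (Nat.sub_one_lt (minDist_pos hw hC).ne').trans_le (minDist_le_maxWt_mul_card w hC)

theorem IsMDS.clog_card_eq {k : ℕ} {C : Finset (ι → Fin k → F)} (hw : ∀ a, w a = 0 → a = 0)
    (hC : C.Nontrivial) (h : IsMDS w (fun _ => k) C) :
    Nat.clog (Fintype.card F) C.card =
      (Fintype.card ι - (minDist w (fun _ => k) C - 1) / maxWt w) * k := by
  have hlog := clog_card_le_sum C
  have hlt := minDist_sub_one_div_maxWt_lt_card hw hC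
  rw [IsMDS, sup_idealsCard_sum_const hlt.le] at h
  simp only [Finset.sum_const, Finset.card_univ, smul_eq_mul] at h hlog
  rw [Nat.sub_mul]
  omega

theorem IsMDS.minDist_sub_one_div_maxWt_eq {k : ℕ} {C : Finset (ι → Fin k → F)}
    (hw : ∀ a, w a = 0 → a = 0) (hC : C.Nontrivial) (h : IsMDS w (fun _ => k) C) :
    (minDist w (fun _ => k) C - 1) / maxWt w =
      Fintype.card ι - Nat.clog (Fintype.card F) C.card / k := by
  have hk : 0 < k := by
    obtain ⟨c₁, -, c₂, -, hne⟩ := hC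
    refine Nat.pos_of_ne_zero ?_
    rintro rfl
    exact hne (Subsingleton.elim c₁ c₂)
  rw [h.clog_card_eq hw hC, Nat.mul_div_cancel _ hk,
    Nat.sub_sub_self (minDist_sub_one_div_maxWt_lt_card hw hC).le]

end Codes

theorem stmt15_general (w : F → ℕ) (hw : ∀ a : F, w a = 0 → a = 0) (k : ℕ)
    (C : Finset (ι → Fin k → F)) (hC : 2 ≤ C.card) (hMDS : IsMDS w (fun _ => k) C) :
    maxWt w * (Fintype.card ι - Nat.clog (Fintype.card F) C.card / k) + 1 ≤
        minDist w (fun _ => k) C ∧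
      minDist w (fun _ => k) C ≤
        maxWt w * (Fintype.card ι - Nat.clog (Fintype.card F) C.card / k + 1) := by
  have hC' : C.Nontrivial := Finset.one_lt_card_iff_nontrivial.1 hC
  have hpos : 0 < minDist w (fun _ => k) C := minDist_pos hw hC'
  rw [← hMDS.minDist_sub_one_div_maxWt_eq hw hC']
  have hlower := Nat.mul_div_le (minDist w (fun _ => k) C - 1) (maxWt w)
  have hupper := Nat.lt_mul_div_succ (minDist w (fun _ => k) C - 1) (maxWt_pos hw)
  constructor <;> omega

/-- when all blocks have dimension `k`, if a `(P,w,π)`-code is MDS (it attains the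
Singleton bound with equality), then
`M_w·(n - ⌈log_q |C|⌉/k) + 1 ≤ d_{(P,w,π)}(C) ≤ M_w·(n - ⌈log_q |C|⌉/k + 1)`. -/
theorem stmt15 (w : F → ℕ) (hw0 : ∀ a : F, w a = 0 ↔ a = 0)
    (hwneg : ∀ a : F, w (-a) = w a) (hwadd : ∀ a b : F, w (a + b) ≤ w a + w b)
    (k : ℕ) (C : Finset (∀ _ : ι, Fin k → F)) (hC : 2 ≤ C.card)
    (d : ℕ)
    (hd : d = sInf {s : ℕ | ∃ c₁ ∈ C, ∃ c₂ ∈ C, c₁ ≠ c₂ ∧ dP w (fun _ => k) c₁ c₂ = s})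
    (hMDS : (idealsCard ι ((d - 1) / maxWt w)).sup (fun J => ∑ _i ∈ J, k) =
      Fintype.card ι * k - Nat.clog (Fintype.card F) C.card) :
    maxWt w * (Fintype.card ι - Nat.clog (Fintype.card F) C.card / k) + 1 ≤ d ∧
      d ≤ maxWt w * (Fintype.card ι - Nat.clog (Fintype.card F) C.card / k + 1) := by
  subst hd
  exact stmt15_general w (fun a => (hw0 a).1) k C hC (by simpa [IsMDS, minDist] using hMDS)
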